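/- arXiv:1904.02179 — 10 statements merged into one kernel-verified Lean document; each statement's English description precedes it below -/
import Mathlib

section
/- Let (R,B) be an EIC problem with problem graph G, column repetition function φ_{(R,B)}, and 𝒜_{(R,B)} the image of φ_{(R,B)}. Then the minimum length of a centralized linear broadcast solution equals the restricted minrank: (C)_{(R,B)} = rminrk_2(G, 𝒜_{(R,B)}). -/
open Matrix BigOperators

namespace EIC

variable {n m : ℕ}

/-- The vertex set of the problem graph of the EIC problem `(R, B)`:
one vertex for each requirement pair `(u, a)` with `R u a = 1`. -/
abbrev Vtx (R : Matrix (Fin n) (Fin m) (ZMod 2)) : Type :=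
  {p : Fin n × Fin m // R p.1 p.2 = 1}

/-- `(R, B)` have disjoint supports: no position has both `B = 1` and `R = 1`. -/
def DisjointSupports (R B : Matrix (Fin n) (Fin m) (ZMod 2)) : Prop :=
  ∀ u a, ¬(B u a = 1 ∧ R u a = 1)

/-- The standard basis vector `e_a ∈ F_2^m`. -/
def e (m : ℕ) (a : Fin m) : Fin m → ZMod 2 := Pi.single a 1

/-- `β` (with rows indexed by `ι`) is a centralized linear broadcast solution to `(R, B)`:
for every requirement pair `(u, a)` there is `α` with `e_a = α · [β ; diag(B_u)]`. -/
def IsCentralizedSolution (R B : Matrix (Fin n) (Fin m) (ZMod 2))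
    {ι : Type} [Fintype ι] (β : Matrix ι (Fin m) (ZMod 2)) : Prop :=
  ∀ u a, R u a = 1 →
    ∃ α : ι ⊕ Fin m → ZMod 2,
      e m a = α ᵥ* Matrix.fromRows β (Matrix.diagonal (B u))

/-- `(C)_{(R,B)}`: the minimum length of a centralized linear broadcast solution. -/
noncomputable def Copt (R B : Matrix (Fin n) (Fin m) (ZMod 2)) : ℕ :=
  sInf {h | ∃ β : Matrix (Fin h) (Fin m) (ZMod 2), IsCentralizedSolution R B β}

/-- The vertical concatenation of the matrices `β u`, `u ∈ [n]`. -/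
def vconcat {h : Fin n → ℕ} (β : ∀ u : Fin n, Matrix (Fin (h u)) (Fin m) (ZMod 2)) :
    Matrix ((ℓ : Fin n) × Fin (h ℓ)) (Fin m) (ZMod 2) :=
  Matrix.of fun p => β p.1 p.2

/-- `β⁽¹⁾, …, β⁽ⁿ⁾` is a (decentralized) linear broadcast solution to `(R, B)`. -/
def IsBroadcastSolution (R B : Matrix (Fin n) (Fin m) (ZMod 2))
    {h : Fin n → ℕ} (β : ∀ u : Fin n, Matrix (Fin (h u)) (Fin m) (ZMod 2)) : Prop :=
  (∀ u a, B u a = 0 → ∀ i, β u i a = 0) ∧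
  ∀ u a, R u a = 1 →
    ∃ α : ((ℓ : Fin n) × Fin (h ℓ)) ⊕ Fin m → ZMod 2,
      e m a = α ᵥ* Matrix.fromRows (vconcat β) (Matrix.diagonal (B u))

/-- `(D)_{(R,B)}`: the minimum length of a decentralized linear broadcast solution. -/
noncomputable def Dopt (R B : Matrix (Fin n) (Fin m) (ZMod 2)) : ℕ :=
  sInf {s | ∃ (h : Fin n → ℕ) (β : ∀ u : Fin n, Matrix (Fin (h u)) (Fin m) (ZMod 2)),
    IsBroadcastSolution R B β ∧ ∑ u, h u = s}

/-- A task-based solution: a linear broadcast solution where every requirement pair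
`(u, a)` can be decoded from the broadcast of a single responsible sender `ℓ`. -/
def IsTaskBased (R B : Matrix (Fin n) (Fin m) (ZMod 2))
    {h : Fin n → ℕ} (β : ∀ u : Fin n, Matrix (Fin (h u)) (Fin m) (ZMod 2)) : Prop :=
  IsBroadcastSolution R B β ∧
  ∀ u a, R u a = 1 → ∃ ℓ : Fin n, ∃ α : Fin (h ℓ) ⊕ Fin m → ZMod 2,
    e m a = α ᵥ* Matrix.fromRows (β ℓ) (Matrix.diagonal (B u))

/-- `(T)_{(R,B)}`: the minimum length of a task-based solution. -/
noncomputable def Topt (R B : Matrix (Fin n) (Fin m) (ZMod 2)) : ℕ :=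
  sInf {s | ∃ (h : Fin n → ℕ) (β : ∀ u : Fin n, Matrix (Fin (h u)) (Fin m) (ZMod 2)),
    IsTaskBased R B β ∧ ∑ u, h u = s}

/-- The edge relation of the problem graph: for distinct requirement pairs `(u,a)`, `(w,b)`,
there is an edge from `v_{(u,a)}` to `v_{(w,b)}` iff `B u b = 1` or `a = b`. -/
def probEdge (R B : Matrix (Fin n) (Fin m) (ZMod 2)) (v w : Vtx R) : Prop :=
  v ≠ w ∧ (B v.1.1 w.1.2 = 1 ∨ v.1.2 = w.1.2)

/-- A matrix `A` fits a directed graph with edge relation `E`. -/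
def Fits {V : Type} (E : V → V → Prop) (A : Matrix V V (ZMod 2)) : Prop :=
  (∀ k, A k k = 1) ∧ ∀ k l, k ≠ l → ¬ E k l → A k l = 0

/-- `minrk₂`: the minimum `F₂`-rank of a matrix fitting the graph. -/
noncomputable def minrk {V : Type} [Fintype V] (E : V → V → Prop) : ℕ :=
  sInf {r | ∃ A : Matrix V V (ZMod 2), Fits E A ∧ A.rank = r}

/-- `rminrk₂`: the minimum `F₂`-rank of a matrix in `𝒜` fitting the graph. -/
noncomputable def rminrk {V : Type} [Fintype V] (E : V → V → Prop)
    (𝒜 : Set (Matrix V V (ZMod 2))) : ℕ :=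
  sInf {r | ∃ A ∈ 𝒜, Fits E A ∧ A.rank = r}

/-- The column repetition function `φ_{(R,B)}`: the column of `φ(A)` indexed by
`v_{(u,a)}` is the `a`-th column of `A`. -/
def phi (R : Matrix (Fin n) (Fin m) (ZMod 2))
    (A : Matrix (Vtx R) (Fin m) (ZMod 2)) : Matrix (Vtx R) (Vtx R) (ZMod 2) :=
  Matrix.of fun k v => A k v.1.2

/-- The sender neighborhood `N_u = {v_{(w,b)} ∈ V : B u b = 1}`. -/
def senderNbhd (R B : Matrix (Fin n) (Fin m) (ZMod 2)) (u : Fin n) : Set (Vtx R) :=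
  {v | B u v.1.2 = 1}

/-- A neighborhood partition `{Ñ_1, …, Ñ_n}`. -/
def IsNbhdPartition (R B : Matrix (Fin n) (Fin m) (ZMod 2))
    (N : Fin n → Set (Vtx R)) : Prop :=
  (∀ i, N i ⊆ senderNbhd R B i) ∧
  (∀ i j, i ≠ j → Disjoint (N i) (N j)) ∧
  (⋃ i, N i) = Set.univ

open Classical in
/-- `R^(i)`: the request matrix of the EIC subproblem induced by `Ñ_i`; it has ones
exactly at the requirement pairs whose vertex lies in `Ñ_i`. -/
noncomputable def Rsub (R : Matrix (Fin n) (Fin m) (ZMod 2))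
    (N : Fin n → Set (Vtx R)) (i : Fin n) : Matrix (Fin n) (Fin m) (ZMod 2) :=
  Matrix.of fun u a =>
    if hr : R u a = 1 then (if (⟨(u, a), hr⟩ : Vtx R) ∈ N i then 1 else 0) else 0

open Classical in
/-- `B^(i)`: the has-matrix of the EIC subproblem induced by `Ñ_i`; it agrees with `B`
on the columns of blocks requested in `Ñ_i` and is zero elsewhere. -/
noncomputable def Bsub (R B : Matrix (Fin n) (Fin m) (ZMod 2))
    (N : Fin n → Set (Vtx R)) (i : Fin n) : Matrix (Fin n) (Fin m) (ZMod 2) :=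
  Matrix.of fun u a => if ∃ v ∈ N i, v.1.2 = a then B u a else 0

/-- `Cl` is a clique for the edge relation `E`. -/
def IsClique {V : Type} (E : V → V → Prop) (Cl : Set V) : Prop :=
  ∀ k ∈ Cl, ∀ l ∈ Cl, k ≠ l → E k l

/-- `I` is an independent set for the edge relation `E` (no edge in either direction). -/
def IsIndep {V : Type} (E : V → V → Prop) (I : Set V) : Prop :=
  ∀ k ∈ I, ∀ l ∈ I, k ≠ l → ¬ E k l ∧ ¬ E l k

/-- `χ(Ḡ|_S)`: the minimum number of cliques of the induced subgraph `G|_S`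
needed to partition `S`. -/
noncomputable def cliqueCoverNum {V : Type} (E : V → V → Prop) (S : Set V) : ℕ :=
  sInf {t | ∃ Cl : Fin t → Set V, (∀ i, Cl i ⊆ S) ∧ (∀ i, IsClique E (Cl i)) ∧
    (∀ i j, i ≠ j → Disjoint (Cl i) (Cl j)) ∧ (⋃ i, Cl i) = S}

/-- `χ(G)`: the minimum number of independent sets of `G` needed to partition
its vertex set. -/
noncomputable def chromNum {V : Type} [Fintype V] (E : V → V → Prop) : ℕ :=
  sInf {t | ∃ I : Fin t → Set V, (∀ i, IsIndep E (I i)) ∧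
    (∀ i j, i ≠ j → Disjoint (I i) (I j)) ∧ (⋃ i, I i) = Set.univ}

/-- `ω(Ḡ|_S)`: the maximum size of an independent set of the induced subgraph `G|_S`. -/
noncomputable def indepNum {V : Type} (E : V → V → Prop) (S : Set V) : ℕ :=
  sSup {t | ∃ I ⊆ S, IsIndep E I ∧ I.ncard = t}

/-- The set of neighborhood-cliques: vertex sets of maximal cliques of the induced
subgraphs `G|_{N_i}`, over all senders `i`. -/
def nbhdCliques (R B : Matrix (Fin n) (Fin m) (ZMod 2)) : Set (Set (Vtx R)) :=
  {Cl | ∃ i : Fin n, Cl ⊆ senderNbhd R B i ∧ IsClique (probEdge R B) Cl ∧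
    ∀ Cl', Cl ⊆ Cl' → Cl' ⊆ senderNbhd R B i → IsClique (probEdge R B) Cl' → Cl' = Cl}

theorem rank_factor {V : Type} [Fintype V] (A : Matrix V V (ZMod 2)) :
    ∃ (C : Matrix V (Fin A.rank) (ZMod 2)) (D : Matrix (Fin A.rank) V (ZMod 2)), A = C * D := by
  classical
  have hr : Module.finrank (ZMod 2) (Submodule.span (ZMod 2) (Set.range A.row)) = A.rank :=
    (Matrix.rank_eq_finrank_span_row A).symm
  let b := Module.finBasisOfFinrankEq (ZMod 2) _ hr
  refine ⟨Matrix.of fun k i => b.repr ⟨A k, Submodule.subset_span ⟨k, rfl⟩⟩ i,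
    Matrix.of fun i v => (b i : V → ZMod 2) v, ?_⟩
  ext k v
  have h := b.sum_repr ⟨A k, Submodule.subset_span ⟨k, rfl⟩⟩
  have h2 := congrFun (congrArg Subtype.val h) v
  rw [Matrix.mul_apply]
  simp only [Matrix.of_apply]
  rw [AddSubmonoidClass.coe_finset_sum, Finset.sum_apply] at h2
  exact h2.symm

theorem zmod2_ne_one {x : ZMod 2} (h : x ≠ 1) : x = 0 := by
  revert h; revert x; decide

theorem sol_of_fits {n m : ℕ} (R B : Matrix (Fin n) (Fin m) (ZMod 2))
    (A0 : Matrix (Vtx R) (Fin m) (ZMod 2)) (hA : Fits (probEdge R B) (phi R A0)) :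
    ∃ β : Matrix (Fin (phi R A0).rank) (Fin m) (ZMod 2), IsCentralizedSolution R B β := by
  classical
  obtain ⟨C, D, hCD⟩ := rank_factor (phi R A0)
  let β : Matrix (Fin (phi R A0).rank) (Fin m) (ZMod 2) := Matrix.of fun i b =>
    if h : ∃ v : Vtx R, v.1.2 = b then D i h.choose else 0
  have hβ : ∀ (k : Vtx R) (b : Fin m), (C k ᵥ* β) b =
      if ∃ v : Vtx R, v.1.2 = b then A0 k b else 0 := by
    intro k b
    by_cases h : ∃ v : Vtx R, v.1.2 = b
    · have h1 := congrFun (congrFun hCD k) h.choose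
      rw [Matrix.mul_apply] at h1
      simp only [phi, Matrix.of_apply, h.choose_spec] at h1
      rw [if_pos h, h1]
      simp only [Matrix.vecMul, dotProduct, β, Matrix.of_apply, dif_pos h]
      rfl
    · simp only [Matrix.vecMul, dotProduct, β, Matrix.of_apply, dif_neg h, if_neg h]
      simp
  refine ⟨β, fun u a hua => ?_⟩
  let k : Vtx R := ⟨(u, a), hua⟩
  refine ⟨Sum.elim (C k) (fun b => if b = a then 0 else (C k ᵥ* β) b), ?_⟩
  rw [Matrix.sumElim_vecMul_fromRows]
  ext b
  rw [Pi.add_apply, Matrix.vecMul_diagonal, hβ]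
  by_cases hb : b = a
  · subst hb
    have h1 : A0 k b = 1 := hA.1 k
    have : ∃ v : Vtx R, v.1.2 = b := ⟨k, rfl⟩
    simp [e, h1, this]
  · simp only [e, if_neg hb, Pi.single_eq_of_ne hb]
    by_cases h : ∃ v : Vtx R, v.1.2 = b
    · rw [if_pos h]
      by_cases hB : B u b = 1
      · rw [hB, mul_one]; exact (CharTwo.add_self_eq_zero _).symm
      · obtain ⟨v, rfl⟩ := h
        have h0 : A0 k v.1.2 = 0 := by
          refine hA.2 k v ?_ ?_
          · rintro rfl; exact hb rfl
          · rintro ⟨-, h | h⟩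
            · exact hB h
            · exact hb h.symm
        rw [h0]; simp
    · rw [if_neg h]; simp

theorem fits_of_sol {n m h : ℕ} (R B : Matrix (Fin n) (Fin m) (ZMod 2))
    (hdisj : DisjointSupports R B)
    (β : Matrix (Fin h) (Fin m) (ZMod 2)) (hβ : IsCentralizedSolution R B β) :
    ∃ A0 : Matrix (Vtx R) (Fin m) (ZMod 2), Fits (probEdge R B) (phi R A0) ∧
      (phi R A0).rank ≤ h := by
  classical
  choose α hα using hβ
  let C : Matrix (Vtx R) (Fin h) (ZMod 2) :=
    Matrix.of fun k i => α k.1.1 k.1.2 k.2 (Sum.inl i)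
  have key : ∀ (k : Vtx R) (b : Fin m), B k.1.1 b ≠ 1 → (C * β) k b = e m k.1.2 b := by
    intro k b hb
    have h1 := congrFun (hα k.1.1 k.1.2 k.2) b
    rw [Matrix.vecMul_fromRows, Pi.add_apply, Matrix.vecMul_diagonal, zmod2_ne_one hb,
      mul_zero, add_zero] at h1
    rw [h1]; rfl
  refine ⟨C * β, ⟨fun k => ?_, fun k l hkl hE => ?_⟩, ?_⟩
  · have := key k k.1.2 (fun hB => hdisj _ _ ⟨hB, k.2⟩)
    simpa [phi, e] using this
  · have h1 : B k.1.1 l.1.2 ≠ 1 := fun hB => hE ⟨hkl, Or.inl hB⟩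
    have h2 : l.1.2 ≠ k.1.2 := fun hB => hE ⟨hkl, Or.inr hB.symm⟩
    have := key k l.1.2 h1
    rw [e, Pi.single_eq_of_ne h2] at this
    exact this
  · have : phi R (C * β) = C * (Matrix.of fun i (v : Vtx R) => β i v.1.2) := by
      ext k v; simp [phi, Matrix.mul_apply]
    rw [this]
    refine (Matrix.rank_mul_le_left _ _).trans ?_
    simpa using Matrix.rank_le_card_width C

theorem centralized_eq_rminrk {n m : ℕ} (R B : Matrix (Fin n) (Fin m) (ZMod 2))
    (hdisj : DisjointSupports R B) :
    Copt R B = rminrk (probEdge R B) (Set.range (phi R)) := by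
  unfold Copt rminrk
  have hsub : ∀ r, r ∈ {r | ∃ A ∈ Set.range (phi R), Fits (probEdge R B) A ∧ A.rank = r} →
      r ∈ {h | ∃ β : Matrix (Fin h) (Fin m) (ZMod 2), IsCentralizedSolution R B β} := by
    rintro r ⟨_, ⟨A0, rfl⟩, hA, rfl⟩
    exact sol_of_fits R B A0 hA
  have hne : {h | ∃ β : Matrix (Fin h) (Fin m) (ZMod 2),
      IsCentralizedSolution R B β}.Nonempty := by
    refine ⟨m, 1, fun u a _ => ⟨Sum.elim (e m a) 0, ?_⟩⟩
    rw [Matrix.sumElim_vecMul_fromRows]; simp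
  obtain ⟨β, hβ⟩ := Nat.sInf_mem hne
  obtain ⟨A0, hA, hr⟩ := fits_of_sol R B hdisj β hβ
  have hmem : (phi R A0).rank ∈
      {r | ∃ A ∈ Set.range (phi R), Fits (probEdge R B) A ∧ A.rank = r} :=
    ⟨_, ⟨A0, rfl⟩, hA, rfl⟩
  apply le_antisymm
  · exact Nat.sInf_le (hsub _ (Nat.sInf_mem ⟨_, hmem⟩))
  · exact (Nat.sInf_le hmem).trans hr

end EIC
end

section
/- Let (R,B) be an EIC problem with problem graph G=(V,E) and let 𝒜_{(R,B)} be the image of the column repetition function φ_{(R,B)}. Then ω(Ḡ) ≤ minrk_2(G) ≤ rminrk_2(G, 𝒜_{(R,B)}) ≤ χ(Ḡ); that is, the maximum size of an independent set of G is at most minrk_2(G), which is at most the restricted minrank rminrk_2(G, 𝒜_{(R,B)}), which is at most the minimum number of cliques of G needed to partition V. -/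
open Matrix BigOperators

namespace EIC

variable {n m : ℕ}

theorem exists_of_cover {n m : ℕ} (R B : Matrix (Fin n) (Fin m) (ZMod 2)) (t : ℕ)
    (Cl : Fin t → Set (Vtx R)) (hC : ∀ i, IsClique (probEdge R B) (Cl i))
    (hU : (⋃ i, Cl i) = Set.univ) :
    ∃ A ∈ Set.range (phi R), Fits (probEdge R B) A ∧ A.rank ≤ t := by
  classical
  have h : ∀ v : Vtx R, ∃ i, v ∈ Cl i := fun v => by
    have : v ∈ ⋃ i, Cl i := hU ▸ Set.mem_univ v
    simpa using this
  choose f hf using h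
  let N : Matrix (Fin t) (Fin m) (ZMod 2) :=
    Matrix.of fun i b => if ∃ v ∈ Cl i, v.1.2 = b then 1 else 0
  refine ⟨phi R (Matrix.of fun k b => N (f k) b), ⟨_, rfl⟩, ⟨?_, ?_⟩, ?_⟩
  · intro k
    simp only [phi, N, Matrix.of_apply]
    exact if_pos ⟨k, hf k, rfl⟩
  · intro k l hkl hE
    simp only [phi, N, Matrix.of_apply]
    refine if_neg ?_
    rintro ⟨v, hv, hvl⟩
    apply hE
    refine ⟨hkl, ?_⟩
    by_cases hkv : k = v
    · right; rw [hkv, hvl]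
    · have := (hC _ k (hf k) v hv hkv).2
      rwa [hvl] at this
  · have : phi R (Matrix.of fun k b => N (f k) b) =
        (Matrix.of fun (k : Vtx R) (i : Fin t) => if f k = i then (1 : ZMod 2) else 0) *
        (Matrix.of fun (i : Fin t) (w : Vtx R) => N i w.1.2) := by
      ext k w
      simp [phi, Matrix.mul_apply]
    rw [this]
    refine (Matrix.rank_mul_le_left _ _).trans ?_
    refine (Matrix.rank_le_card_width _).trans ?_
    simp

theorem indep_le_rank {V : Type} [Fintype V] (E : V → V → Prop) (A : Matrix V V (ZMod 2))
    (hA : Fits E A) (I : Set V) (hI : IsIndep E I) : I.ncard ≤ A.rank := by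
  classical
  have h1 : A.submatrix (Subtype.val : I → V) (Subtype.val : I → V) = 1 := by
    ext i j
    by_cases hij : i = j
    · subst hij; simp [hA.1]
    · have hne : (i : V) ≠ j := fun h => hij (Subtype.ext h)
      simp [Matrix.one_apply_ne hij, hA.2 i j hne (hI i i.2 j j.2 hne).1]
  have h2 : A.submatrix (Subtype.val : I → V) (Subtype.val : I → V) =
      (1 : Matrix V V (ZMod 2)).submatrix (Subtype.val : I → V) id * A *
      (1 : Matrix V V (ZMod 2)).submatrix id (Subtype.val : I → V) := by
    ext i j
    simp [Matrix.mul_apply, Matrix.one_apply]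
  have h3 : I.ncard = (1 : Matrix I I (ZMod 2)).rank := by
    rw [Matrix.rank_one, Set.ncard_eq_toFinset_card', Set.toFinset_card]
  rw [h3, ← h1, h2]
  exact (Matrix.rank_mul_le_left _ _).trans (Matrix.rank_mul_le_right _ _)

theorem minrk_bounds {n m : ℕ} (R B : Matrix (Fin n) (Fin m) (ZMod 2))
    (hdisj : DisjointSupports R B) :
    indepNum (probEdge R B) Set.univ ≤ minrk (probEdge R B) ∧
    minrk (probEdge R B) ≤ rminrk (probEdge R B) (Set.range (phi R)) ∧
    rminrk (probEdge R B) (Set.range (phi R)) ≤ cliqueCoverNum (probEdge R B) Set.univ := by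
  have hc : {t | ∃ Cl : Fin t → Set (Vtx R), (∀ i, Cl i ⊆ Set.univ) ∧
      (∀ i, IsClique (probEdge R B) (Cl i)) ∧
      (∀ i j, i ≠ j → Disjoint (Cl i) (Cl j)) ∧ (⋃ i, Cl i) = Set.univ}.Nonempty := by
    refine ⟨Fintype.card (Vtx R), fun i => {(Fintype.equivFin (Vtx R)).symm i},
      fun i => Set.subset_univ _, ?_, ?_, ?_⟩
    · intro i k hk l hl hkl
      exact absurd (hk.trans hl.symm) hkl
    · intro i j hij
      simpa using hij
    · ext v
      simp only [Set.mem_iUnion, Set.mem_singleton_iff, Set.mem_univ, iff_true]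
      exact ⟨Fintype.equivFin _ v, by simp⟩
  obtain ⟨Cl, -, hC, -, hU⟩ := Nat.sInf_mem hc
  obtain ⟨A, hA, hF, hr⟩ := exists_of_cover R B _ Cl hC hU
  have hrn : {r | ∃ A ∈ Set.range (phi R), Fits (probEdge R B) A ∧ A.rank = r}.Nonempty :=
    ⟨_, A, hA, hF, rfl⟩
  have hmn : {r | ∃ A, Fits (probEdge R B) A ∧ A.rank = r}.Nonempty :=
    ⟨_, A, hF, rfl⟩
  have hle : rminrk (probEdge R B) (Set.range (phi R)) ≤ A.rank :=
    Nat.sInf_le ⟨A, hA, hF, rfl⟩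
  refine ⟨?_, ?_, hle.trans hr⟩
  · obtain ⟨A', hF', hr'⟩ := Nat.sInf_mem hmn
    refine csSup_le ⟨0, ∅, Set.empty_subset _, ?_, by simp⟩ ?_
    · intro k hk; exact absurd hk (Set.notMem_empty k)
    · rintro t ⟨I, -, hI, rfl⟩
      exact (indep_le_rank _ A' hF' I hI).trans hr'.le
  · obtain ⟨A', -, hF', hr'⟩ := Nat.sInf_mem hrn
    exact Nat.sInf_le ⟨A', hF', hr'⟩

end EIC
end

section
/- Let (R,B) be an EIC problem such that every requested block is held by some node (for every (u,a) ∈ P there exists w ∈ [n] with B_{wa}=1). Then (D)_{(R,B)} ≤ 2·(C)_{(R,B)}: there is a decentralized linear broadcast solution whose length is at most twice the minimum length of a centralized linear broadcast solution. -/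
open Matrix BigOperators

namespace EIC

variable {n m : ℕ}

lemma Dopt_le_of_rows {n m : ℕ} (R B : Matrix (Fin n) (Fin m) (ZMod 2))
    {T : Type} [Fintype T] (s : T → Fin n) (r : T → Fin m → ZMod 2)
    (hs : ∀ t b, B (s t) b = 0 → r t b = 0)
    (hr : ∀ u a, R u a = 1 → ∃ c : Fin m → ZMod 2,
      e m a - c ᵥ* Matrix.diagonal (B u) ∈ Submodule.span (ZMod 2) (Set.range r)) :
    Dopt R B ≤ Fintype.card T := by
  classical
  let eq : ∀ u : Fin n, {t // s t = u} ≃ Fin (Fintype.card {t // s t = u}) :=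
    fun u => Fintype.equivFin _
  let β : ∀ u : Fin n, Matrix (Fin (Fintype.card {t // s t = u})) (Fin m) (ZMod 2) :=
    fun u => Matrix.of fun i => r ((eq u).symm i).1
  apply Nat.sInf_le
  refine ⟨fun u => Fintype.card {t // s t = u}, β, ⟨?_, ?_⟩, ?_⟩
  · intro u a hB i
    apply hs
    rw [((eq u).symm i).2]
    exact hB
  · intro u a hR
    obtain ⟨c, hc⟩ := hr u a hR
    have hsub : Set.range r ⊆ Set.range (vconcat β) := by
      rintro _ ⟨t, rfl⟩
      refine ⟨⟨s t, eq (s t) ⟨t, rfl⟩⟩, ?_⟩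
      show r ((eq (s t)).symm (eq (s t) ⟨t, rfl⟩)).1 = r t
      rw [Equiv.symm_apply_apply]
    have h2 := Submodule.span_mono hsub hc
    obtain ⟨d, hd⟩ := (Submodule.mem_span_range_iff_exists_fun (ZMod 2)).1 h2
    refine ⟨Sum.elim d c, ?_⟩
    rw [Matrix.sumElim_vecMul_fromRows, Matrix.vecMul_eq_sum d, hd]
    simp
  · rw [← Fintype.card_sigma]
    exact Fintype.card_congr (Equiv.sigmaFiberEquiv s)

lemma Copt_mem {n m : ℕ} (R B : Matrix (Fin n) (Fin m) (ZMod 2)) :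
    ∃ β : Matrix (Fin (Copt R B)) (Fin m) (ZMod 2), IsCentralizedSolution R B β := by
  have : Copt R B ∈ {h | ∃ β : Matrix (Fin h) (Fin m) (ZMod 2), IsCentralizedSolution R B β} := by
    apply Nat.sInf_mem
    refine ⟨m, 1, ?_⟩
    intro u a _
    refine ⟨Sum.elim (e m a) 0, ?_⟩
    rw [Matrix.sumElim_vecMul_fromRows]
    simp
  exact this

theorem decentralized_le_two_centralized {n m : ℕ}
    (R B : Matrix (Fin n) (Fin m) (ZMod 2)) (hdisj : DisjointSupports R B)
    (hheld : ∀ u a, R u a = 1 → ∃ w, B w a = 1) :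
    Dopt R B ≤ 2 * Copt R B := by
  classical
  obtain ⟨β, hβ⟩ := Copt_mem R B
  have hα : ∀ p : Vtx R, ∃ (d : Fin (Copt R B) → ZMod 2) (c : Fin m → ZMod 2),
      e m p.1.2 = d ᵥ* β + c ᵥ* Matrix.diagonal (B p.1.1) := by
    intro p
    obtain ⟨α, h⟩ := hβ p.1.1 p.1.2 p.2
    refine ⟨α ∘ Sum.inl, α ∘ Sum.inr, ?_⟩
    rw [h, ← Matrix.sumElim_vecMul_fromRows, Sum.elim_comp_inl_inr]
  choose d c hdc using hα
  have hw : ∀ p : Vtx R, ∃ w, B w p.1.2 = 1 := fun p => hheld _ _ p.2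
  choose w hw using hw
  let v : Vtx R → Fin m → ZMod 2 := fun p => d p ᵥ* β
  obtain ⟨κ, f, hf, hspan, hli⟩ := exists_linearIndependent' (ZMod 2) v
  haveI : Fintype κ := Fintype.ofInjective f hf
  have hcard : Fintype.card κ ≤ Copt R B := by
    have h1 : Submodule.span (ZMod 2) (Set.range (v ∘ f))
        ≤ Submodule.span (ZMod 2) (Set.range β) := by
      rw [Submodule.span_le]
      rintro _ ⟨k, rfl⟩
      refine (Submodule.mem_span_range_iff_exists_fun (ZMod 2)).2 ⟨d (f k), ?_⟩
      exact (Matrix.vecMul_eq_sum _ _).symm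
    calc Fintype.card κ
        = Module.finrank (ZMod 2) (Submodule.span (ZMod 2) (Set.range (v ∘ f))) :=
          (finrank_span_eq_card hli).symm
      _ ≤ Module.finrank (ZMod 2) (Submodule.span (ZMod 2) (Set.range β)) :=
          Submodule.finrank_mono h1
      _ ≤ Copt R B := by
          simpa [Set.finrank] using finrank_range_le_card (R := ZMod 2) β
  let s : κ ⊕ κ → Fin n := Sum.elim (fun k => (f k).1.1) (fun k => w (f k))
  let r : κ ⊕ κ → Fin m → ZMod 2 :=
    Sum.elim (fun k => c (f k) ᵥ* Matrix.diagonal (B (f k).1.1)) (fun k => e m (f k).1.2)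
  have key : Dopt R B ≤ Fintype.card (κ ⊕ κ) := by
    apply Dopt_le_of_rows R B s r
    · rintro (k | k) b hb
      · have hb' : B (f k).1.1 b = 0 := hb
        show (c (f k) ᵥ* Matrix.diagonal (B (f k).1.1)) b = 0
        rw [Matrix.vecMul_diagonal, hb', mul_zero]
      · have hb' : B (w (f k)) b = 0 := hb
        show e m (f k).1.2 b = 0
        have hne : b ≠ (f k).1.2 := by
          rintro rfl
          rw [hw] at hb'
          exact one_ne_zero hb'
        simp [e, hne]
    · intro u a hR
      refine ⟨c ⟨(u, a), hR⟩, ?_⟩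
      have h1 := hdc ⟨(u, a), hR⟩
      have h2 : e m a - c ⟨(u, a), hR⟩ ᵥ* Matrix.diagonal (B u) = v ⟨(u, a), hR⟩ :=
        sub_eq_of_eq_add h1
      rw [h2]
      have h3 : v ⟨(u, a), hR⟩ ∈ Submodule.span (ZMod 2) (Set.range (v ∘ f)) := by
        rw [hspan]
        exact Submodule.subset_span ⟨_, rfl⟩
      refine Submodule.span_le.2 ?_ h3
      rintro _ ⟨k, rfl⟩
      have h4 : (v ∘ f) k = r (Sum.inr k) - r (Sum.inl k) :=
        (sub_eq_of_eq_add (hdc (f k))).symm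
      rw [h4]
      exact Submodule.sub_mem _ (Submodule.subset_span ⟨_, rfl⟩) (Submodule.subset_span ⟨_, rfl⟩)
  rw [Fintype.card_sum] at key
  omega

end EIC
end

section
/- Let (R,B) be an EIC problem with problem graph G, let {Ñ_1,…,Ñ_n} be a neighborhood partition, and for each w ∈ [n] let (R^(w),B^(w)) be the EIC subproblem induced by Ñ_w. Suppose that for each w ∈ [n], β^(w) ∈ F_2^{h_w×m} is a centralized linear broadcast solution to (R^(w),B^(w)) whose nonzero columns are indexed only by blocks requested by requirement pairs in Ñ_w. Then β^(1),…,β^(n) is a task-based solution to (R,B) of length Σ_{w=1}^n h_w. -/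
open Matrix BigOperators

namespace EIC

variable {n m : ℕ}

theorem subproblem_solutions_task_based {n m : ℕ}
    (R B : Matrix (Fin n) (Fin m) (ZMod 2)) (hdisj : DisjointSupports R B)
    (N : Fin n → Set (Vtx R)) (hpart : IsNbhdPartition R B N)
    (h : Fin n → ℕ) (β : ∀ w : Fin n, Matrix (Fin (h w)) (Fin m) (ZMod 2))
    (hsol : ∀ w, IsCentralizedSolution (Rsub R N w) (Bsub R B N w) (β w))
    (hcols : ∀ w a, (¬ ∃ v ∈ N w, v.1.2 = a) → ∀ i, β w i a = 0) :
    IsTaskBased R B β := by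
  classical
  obtain ⟨hsub, -, hcov⟩ := hpart
  have key : ∀ u a, R u a = 1 → ∃ ℓ : Fin n, ∃ α : Fin (h ℓ) ⊕ Fin m → ZMod 2,
      e m a = α ᵥ* Matrix.fromRows (β ℓ) (Matrix.diagonal (B u)) := by
    intro u a hr
    have hv : (⟨(u, a), hr⟩ : Vtx R) ∈ ⋃ i, N i := by rw [hcov]; trivial
    obtain ⟨ℓ, hℓ⟩ := Set.mem_iUnion.1 hv
    obtain ⟨α, hα⟩ := hsol ℓ u a (by simp [Rsub, hr, hℓ])
    refine ⟨ℓ, Sum.elim (fun i => α (Sum.inl i))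
      (fun b => if ∃ v ∈ N ℓ, v.1.2 = b then α (Sum.inr b) else 0), ?_⟩
    rw [hα]
    funext b
    rw [Matrix.vecMul_fromRows, Matrix.vecMul_fromRows]
    simp only [Pi.add_apply, Matrix.vecMul_diagonal, Function.comp_apply, Sum.elim_inl,
      Sum.elim_inr, Bsub, Matrix.of_apply]
    congr 1
    split_ifs <;> simp
  refine ⟨⟨?_, ?_⟩, key⟩
  · intro u a hB i
    apply hcols
    rintro ⟨v, hv, rfl⟩
    have h1 : B u v.1.2 = 1 := hsub u hv
    rw [hB] at h1
    exact zero_ne_one h1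
  · intro u a hr
    obtain ⟨ℓ, α, hα⟩ := key u a hr
    refine ⟨Sum.elim (fun p => if hp : p.1 = ℓ then α (Sum.inl (hp ▸ p.2)) else 0)
      (fun b => α (Sum.inr b)), ?_⟩
    rw [hα]
    funext b
    rw [Matrix.vecMul_fromRows, Matrix.vecMul_fromRows]
    simp only [Pi.add_apply, Matrix.vecMul_diagonal, Function.comp_apply, Sum.elim_inr]
    congr 1
    simp only [Matrix.vecMul, dotProduct, vconcat, Matrix.of_apply, Function.comp_apply,
      Sum.elim_inl]
    rw [Fintype.sum_sigma, Finset.sum_eq_single ℓ]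
    · simp
    · intro k _ hk
      simp [hk]
    · simp

end EIC
end

section
/- Let (R,B) be an EIC problem with problem graph G in which every requested block is held by some node (so that at least one neighborhood partition exists). Let 𝒩 be the set of all neighborhood partitions. Then the minimum length of a task-based solution satisfies (T)_{(R,B)} = min over {Ñ_1,…,Ñ_n} ∈ 𝒩 of Σ_{i=1}^n rminrk_2(G|_{Ñ_i}, 𝒜_{(R^(i),B^(i))}), where (R^(i),B^(i)) is the EIC subproblem induced by Ñ_i. -/
open Matrix BigOperators

namespace EIC

variable {n m : ℕ}

lemma zmod2_cases (x : ZMod 2) : x = 0 ∨ x = 1 := by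
  revert x; decide

lemma decode_iff {ι : Type} [Fintype ι] (β : Matrix ι (Fin m) (ZMod 2)) (d : Fin m → ZMod 2)
    (a : Fin m) (hd : d a = 0) :
    (∃ α : ι ⊕ Fin m → ZMod 2, e m a = α ᵥ* Matrix.fromRows β (Matrix.diagonal d)) ↔
    ∃ γ : ι → ZMod 2, (γ ᵥ* β) a = 1 ∧ ∀ b, b ≠ a → d b = 0 → (γ ᵥ* β) b = 0 := by
  constructor
  · rintro ⟨α, hα⟩
    refine ⟨α ∘ Sum.inl, ?_, ?_⟩
    · have := congrFun hα a
      simpa [e, Matrix.vecMul_fromRows, Matrix.vecMul_diagonal, hd] using this.symm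
    · intro b hb hb0
      have := congrFun hα b
      simpa [e, Matrix.vecMul_fromRows, Matrix.vecMul_diagonal, hb0, hb] using this.symm
  · rintro ⟨γ, h1, h2⟩
    refine ⟨Sum.elim γ (e m a - γ ᵥ* β), ?_⟩
    funext b
    rw [Matrix.vecMul_fromRows]
    simp only [Sum.elim_comp_inl, Sum.elim_comp_inr, Pi.add_apply, Matrix.vecMul_diagonal,
      Pi.sub_apply]
    by_cases hb : b = a
    · subst hb
      simp [h1, hd, e]
    · rcases zmod2_cases (d b) with h | h
      · simp [h, h2 b hb h, e, hb]
      · simp [h]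

lemma exists_rank_factor {ι κ : Type} [Fintype ι] [Fintype κ] [DecidableEq κ]
    (A : Matrix ι κ (ZMod 2)) :
    ∃ (X : Matrix ι (Fin A.rank) (ZMod 2)) (Y : Matrix (Fin A.rank) κ (ZMod 2)), A = X * Y := by
  let b : Module.Basis (Fin A.rank) (ZMod 2) (LinearMap.range A.mulVecLin) :=
    Module.finBasisOfFinrankEq (ZMod 2) _ rfl
  let c : κ → LinearMap.range A.mulVecLin := fun k => ⟨A.col k, Pi.single k 1, by simp⟩
  refine ⟨Matrix.of fun i j => (b j : ι → ZMod 2) i, Matrix.of fun j k => b.repr (c k) j, ?_⟩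
  ext i k
  have h := congrArg (fun x : LinearMap.range A.mulVecLin => (x : ι → ZMod 2) i) (b.sum_repr (c k))
  simp only [Submodule.coe_sum, Finset.sum_apply, Submodule.coe_smul, Pi.smul_apply,
    smul_eq_mul] at h
  rw [Matrix.mul_apply]
  simp only [Matrix.of_apply]
  rw [show A i k = ((c k : LinearMap.range A.mulVecLin) : ι → ZMod 2) i from rfl, ← h]
  exact Finset.sum_congr rfl fun _ _ => mul_comm _ _

lemma Rsub_eq_one {R : Matrix (Fin n) (Fin m) (ZMod 2)} {N : Fin n → Set (Vtx R)} {i u a} :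
    Rsub R N i u a = 1 ↔ ∃ hr : R u a = 1, (⟨(u, a), hr⟩ : Vtx R) ∈ N i := by
  unfold Rsub
  simp only [Matrix.of_apply]
  split_ifs with h1 h2
  · simp [h1, h2]
  · simp [h2]
  · simp [h1]

lemma Bsub_req {R B : Matrix (Fin n) (Fin m) (ZMod 2)} {N : Fin n → Set (Vtx R)} {i u}
    (w : Vtx (Rsub R N i)) : Bsub R B N i u w.1.2 = B u w.1.2 := by
  obtain ⟨hr, hw⟩ := Rsub_eq_one.1 w.2
  unfold Bsub
  simp only [Matrix.of_apply]
  rw [if_pos ⟨_, hw, rfl⟩]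

/-- From a partition, a task-based solution. -/
lemma topt_le (R B : Matrix (Fin n) (Fin m) (ZMod 2)) (hdisj : DisjointSupports R B)
    (N : Fin n → Set (Vtx R)) (hN : IsNbhdPartition R B N) :
    ∃ (h : Fin n → ℕ) (β : ∀ u : Fin n, Matrix (Fin (h u)) (Fin m) (ZMod 2)),
      IsTaskBased R B β ∧ ∑ u, h u = ∑ i, rminrk (probEdge (Rsub R N i) (Bsub R B N i))
        (Set.range (phi (Rsub R N i))) := by
  classical
  have key : ∀ i, ∃ β : Matrix (Fin (rminrk (probEdge (Rsub R N i) (Bsub R B N i))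
        (Set.range (phi (Rsub R N i))))) (Fin m) (ZMod 2),
      (∀ a, B i a = 0 → ∀ j, β j a = 0) ∧
      ∀ v ∈ N i, ∃ γ, (γ ᵥ* β) v.1.2 = 1 ∧
        ∀ b, b ≠ v.1.2 → B v.1.1 b = 0 → (γ ᵥ* β) b = 0 := by
    intro i
    have hne : {r | ∃ A ∈ Set.range (phi (Rsub R N i)),
        Fits (probEdge (Rsub R N i) (Bsub R B N i)) A ∧ A.rank = r}.Nonempty := by
      refine ⟨_, _, ⟨Matrix.of fun v b => if v.1.2 = b then 1 else 0, rfl⟩, ⟨?_, ?_⟩, rfl⟩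
      · intro k; simp [phi]
      · intro k l hkl hE
        have : k.1.2 ≠ l.1.2 := fun h => hE ⟨hkl, Or.inr h⟩
        simp [phi, this]
    obtain ⟨A, ⟨M, rfl⟩, hfit, hrank⟩ := Nat.sInf_mem hne
    change _ = rminrk _ _ at hrank
    rw [← hrank]
    obtain ⟨X, Y, hXY⟩ := exists_rank_factor (phi (Rsub R N i) M)
    let S : Matrix (Vtx (Rsub R N i)) (Fin m) (ZMod 2) := Matrix.of fun w b =>
      if h : ∃ w' : Vtx (Rsub R N i), w'.1.2 = b then (if w = h.choose then 1 else 0) else 0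
    have hS0 : ∀ b, (¬ ∃ w' : Vtx (Rsub R N i), w'.1.2 = b) → ∀ w, S w b = 0 := by
      intro b hb w; simp only [S, Matrix.of_apply, dif_neg hb]
    have hPS0 : ∀ v b, (¬ ∃ w' : Vtx (Rsub R N i), w'.1.2 = b) →
        (phi (Rsub R N i) M * S) v b = 0 := by
      intro v b hb
      rw [Matrix.mul_apply]
      exact Finset.sum_eq_zero fun w _ => by rw [hS0 b hb, mul_zero]
    have hPS1 : ∀ v (w : Vtx (Rsub R N i)),
        (phi (Rsub R N i) M * S) v w.1.2 = M v w.1.2 := by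
      intro v w
      have h : ∃ w' : Vtx (Rsub R N i), w'.1.2 = w.1.2 := ⟨w, rfl⟩
      rw [Matrix.mul_apply]
      simp only [S, Matrix.of_apply, dif_pos h, mul_ite, mul_one, mul_zero,
        Finset.sum_ite_eq', Finset.mem_univ, if_true]
      simp only [phi, Matrix.of_apply, h.choose_spec]
    refine ⟨Y * S, ?_, ?_⟩
    · intro a ha j
      rw [Matrix.mul_apply]
      refine Finset.sum_eq_zero fun w _ => ?_
      rw [hS0, mul_zero]
      rintro ⟨w', rfl⟩
      obtain ⟨hr, hw⟩ := Rsub_eq_one.1 w'.2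
      have := hN.1 i hw
      simp only [senderNbhd, Set.mem_ofPred_eq] at this
      rw [ha] at this
      exact zero_ne_one this
    · intro v hv
      let v' : Vtx (Rsub R N i) := ⟨v.1, Rsub_eq_one.2 ⟨v.2, hv⟩⟩
      have hrow : X v' ᵥ* (Y * S) = (phi (Rsub R N i) M * S) v' := by
        conv_rhs => rw [hXY, Matrix.mul_assoc]
        funext b
        rfl
      refine ⟨X v', ?_, ?_⟩
      · rw [hrow]
        exact (hPS1 v' v').trans (hfit.1 v')
      · intro b hb hB
        rw [hrow]
        by_cases h : ∃ w' : Vtx (Rsub R N i), w'.1.2 = b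
        · obtain ⟨w, rfl⟩ := h
          rw [hPS1]
          refine hfit.2 v' w (fun h => hb (by rw [← h])) ?_
          rintro ⟨_, h | h⟩
          · rw [Bsub_req] at h
            exact zero_ne_one (hB.symm.trans h)
          · exact hb h.symm
        · exact hPS0 _ _ h
  choose β hβ0 hβ1 using key
  refine ⟨_, β, ⟨⟨fun u a h i => hβ0 u a h i, ?_⟩, ?_⟩, rfl⟩
  · intro u a hr
    have hd : B u a = 0 := (zmod2_cases _).resolve_right fun h => hdisj u a ⟨h, hr⟩
    rw [decode_iff _ _ _ hd]
    obtain ⟨i, hi⟩ := Set.mem_iUnion.1 (hN.2.2 ▸ Set.mem_univ (⟨(u, a), hr⟩ : Vtx R))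
    obtain ⟨γ, h1, h2⟩ := hβ1 i _ hi
    let γ' : ((ℓ : Fin n) × Fin (rminrk (probEdge (Rsub R N ℓ) (Bsub R B N ℓ))
        (Set.range (phi (Rsub R N ℓ))))) → ZMod 2 :=
      fun p => if h : p.1 = i then γ (h ▸ p.2) else 0
    have : γ' ᵥ* vconcat β = γ ᵥ* β i := by
      funext b
      simp only [Matrix.vecMul, dotProduct]
      rw [Fintype.sum_sigma, Finset.sum_eq_single i]
      · simp [γ', vconcat]
      · intro j _ hj
        simp [γ', hj]
      · simp
    exact ⟨γ', by rw [this]; exact h1, by rw [this]; exact h2⟩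
  · intro u a hr
    have hd : B u a = 0 := (zmod2_cases _).resolve_right fun h => hdisj u a ⟨h, hr⟩
    obtain ⟨i, hi⟩ := Set.mem_iUnion.1 (hN.2.2 ▸ Set.mem_univ (⟨(u, a), hr⟩ : Vtx R))
    exact ⟨i, (decode_iff _ _ _ hd).2 (hβ1 i _ hi)⟩

/-- From a task-based solution, a partition. -/
lemma exists_partition (R B : Matrix (Fin n) (Fin m) (ZMod 2)) (hdisj : DisjointSupports R B)
    (h : Fin n → ℕ) (β : ∀ u : Fin n, Matrix (Fin (h u)) (Fin m) (ZMod 2))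
    (hβ : IsTaskBased R B β) :
    ∃ N : Fin n → Set (Vtx R), IsNbhdPartition R B N ∧
      ∑ i, rminrk (probEdge (Rsub R N i) (Bsub R B N i))
        (Set.range (phi (Rsub R N i))) ≤ ∑ u, h u := by
  classical
  have key : ∀ v : Vtx R, ∃ ℓ : Fin n, ∃ γ : Fin (h ℓ) → ZMod 2, (γ ᵥ* β ℓ) v.1.2 = 1 ∧
        ∀ b, b ≠ v.1.2 → B v.1.1 b = 0 → (γ ᵥ* β ℓ) b = 0 := by
    intro v
    have hd : B v.1.1 v.1.2 = 0 := (zmod2_cases _).resolve_right fun h => hdisj _ _ ⟨h, v.2⟩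
    obtain ⟨ℓ, hα⟩ := hβ.2 v.1.1 v.1.2 v.2
    exact ⟨ℓ, (decode_iff _ _ _ hd).1 hα⟩
  choose L hL using key
  refine ⟨fun i => {v | L v = i}, ⟨?_, ?_, ?_⟩, ?_⟩
  · rintro i v rfl
    refine (zmod2_cases _).resolve_left fun h0 => ?_
    obtain ⟨γ, h1, -⟩ := hL v
    have : (γ ᵥ* β (L v)) v.1.2 = 0 := by
      simp only [Matrix.vecMul, dotProduct]
      exact Finset.sum_eq_zero fun j _ => by rw [hβ.1.1 _ _ h0, mul_zero]
    rw [this] at h1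
    exact zero_ne_one h1
  · intro i j hij
    rw [Set.disjoint_left]
    rintro v rfl h2
    exact hij h2
  · ext v; simp
  · refine Finset.sum_le_sum fun i _ => ?_
    set N : Fin n → Set (Vtx R) := fun i => {v | L v = i} with hNdef
    have hv : ∀ v : Vtx (Rsub R N i), ∃ γ : Fin (h i) → ZMod 2, (γ ᵥ* β i) v.1.2 = 1 ∧
        ∀ b, b ≠ v.1.2 → B v.1.1 b = 0 → (γ ᵥ* β i) b = 0 := by
      intro v
      obtain ⟨hr, hv⟩ := Rsub_eq_one.1 v.2
      have hv' : L ⟨(v.1.1, v.1.2), hr⟩ = i := hv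
      have hL' := hL ⟨(v.1.1, v.1.2), hr⟩
      rw [hv'] at hL'
      exact hL'
    choose γ hγ1 hγ2 using hv
    let G : Matrix (Vtx (Rsub R N i)) (Fin (h i)) (ZMod 2) := Matrix.of γ
    let S : Matrix (Fin m) (Vtx (Rsub R N i)) (ZMod 2) :=
      Matrix.of fun b w => if b = w.1.2 then 1 else 0
    have hphi : phi (Rsub R N i) (G * β i) = G * (β i * S) := by
      rw [← Matrix.mul_assoc]
      ext v w
      rw [Matrix.mul_apply]
      simp [S, phi]
    have hrank : (phi (Rsub R N i) (G * β i)).rank ≤ h i := by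
      rw [hphi]
      exact (Matrix.rank_mul_le_left _ _).trans ((Matrix.rank_le_card_width _).trans (by simp))
    refine le_trans (Nat.sInf_le ⟨_, ⟨G * β i, rfl⟩, ⟨?_, ?_⟩, rfl⟩) hrank
    · intro v; exact hγ1 v
    · intro v w hvw hE
      refine hγ2 v _ (fun h => hE ⟨hvw, Or.inr h.symm⟩) ?_
      refine (zmod2_cases _).resolve_right fun h => hE ⟨hvw, Or.inl ?_⟩
      rw [Bsub_req]; exact h

theorem taskbased_eq_min_partition_rminrk {n m : ℕ}
    (R B : Matrix (Fin n) (Fin m) (ZMod 2)) (hdisj : DisjointSupports R B)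
    (hheld : ∀ u a, R u a = 1 → ∃ w, B w a = 1) :
    Topt R B = sInf {s | ∃ N : Fin n → Set (Vtx R), IsNbhdPartition R B N ∧
      s = ∑ i, rminrk (probEdge (Rsub R N i) (Bsub R B N i))
        (Set.range (phi (Rsub R N i)))} := by
  have hne : ∃ N : Fin n → Set (Vtx R), IsNbhdPartition R B N := by
    choose! w hw using hheld
    refine ⟨fun i => {v | w v.1.1 v.1.2 = i}, ?_, ?_, ?_⟩
    · rintro i v rfl
      exact hw _ _ v.2
    · intro i j hij
      rw [Set.disjoint_left]
      rintro v rfl h2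
      exact hij h2
    · ext v; simp
  apply le_antisymm
  · obtain ⟨N₀, hN₀⟩ := hne
    refine le_csInf ⟨_, N₀, hN₀, rfl⟩ ?_
    rintro s ⟨N, hN, rfl⟩
    exact Nat.sInf_le (topt_le R B hdisj N hN)
  · obtain ⟨N₀, hN₀⟩ := hne
    refine le_csInf ⟨_, topt_le R B hdisj N₀ hN₀⟩ ?_
    rintro s ⟨h, β, hβ, rfl⟩
    obtain ⟨N, hN, hle⟩ := exists_partition R B hdisj h β hβ
    exact le_trans (Nat.sInf_le ⟨N, hN, rfl⟩) hle

end EIC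
end

section
/- Let (R,B) be an EIC problem with problem graph G in which every requested block is held by some node, and let 𝒩 be the set of all neighborhood partitions. Then (T)_{(R,B)} ≤ min over {Ñ_1,…,Ñ_n} ∈ 𝒩 of Σ_{i=1}^n χ(Ḡ|_{Ñ_i}), where χ(Ḡ|_{Ñ_i}) is the minimum number of cliques of the induced subgraph G|_{Ñ_i} needed to partition Ñ_i. -/
open Matrix BigOperators

namespace EIC

variable {n m : ℕ}

/-- A minimum clique partition of `S` exists. -/
lemma cliqueCover_spec {V : Type} [Finite V] (E : V → V → Prop) (S : Set V) :
    ∃ Cl : Fin (cliqueCoverNum E S) → Set V, (∀ i, Cl i ⊆ S) ∧ (∀ i, IsClique E (Cl i)) ∧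
    (∀ i j, i ≠ j → Disjoint (Cl i) (Cl j)) ∧ (⋃ i, Cl i) = S := by
  apply Nat.sInf_mem (s := {t | ∃ Cl : Fin t → Set V, (∀ i, Cl i ⊆ S) ∧
    (∀ i, IsClique E (Cl i)) ∧
    (∀ i j, i ≠ j → Disjoint (Cl i) (Cl j)) ∧ (⋃ i, Cl i) = S})
  obtain ⟨k, ⟨f⟩⟩ := Finite.exists_equiv_fin S
  refine ⟨k, fun i => {(f.symm i : V)}, ?_, ?_, ?_, ?_⟩
  · intro i x hx
    rw [Set.mem_singleton_iff] at hx
    rw [hx]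
    exact (f.symm i).2
  · intro i x hx y hy hne
    rw [Set.mem_singleton_iff] at hx hy
    exact absurd (hx.trans hy.symm) hne
  · intro i j hij
    rw [Set.disjoint_singleton]
    intro h
    exact hij (f.symm.injective (Subtype.ext h))
  · ext x
    simp only [Set.mem_iUnion, Set.mem_singleton_iff]
    constructor
    · rintro ⟨i, rfl⟩
      exact (f.symm i).2
    · intro hx
      exact ⟨f ⟨x, hx⟩, by simp⟩

open Classical in
/-- The indicator row of the blocks requested in a set of vertices. -/
noncomputable def cliqueRow {n m : ℕ} (R : Matrix (Fin n) (Fin m) (ZMod 2))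
    (Cl : Set (Vtx R)) : Fin m → ZMod 2 :=
  fun a => if ∃ v ∈ Cl, v.1.2 = a then 1 else 0

/-- Any matrix containing the row of a clique through `(u, a)` lets `u` decode `a`. -/
lemma decode {n m : ℕ} (R B : Matrix (Fin n) (Fin m) (ZMod 2)) {ι : Type} [Fintype ι]
    (M : Matrix ι (Fin m) (ZMod 2)) (Cl : Set (Vtx R))
    (hCl : IsClique (probEdge R B) Cl) (v : Vtx R) (hv : v ∈ Cl) (i : ι)
    (hi : M i = cliqueRow R Cl) :
    ∃ α : ι ⊕ Fin m → ZMod 2,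
      e m v.1.2 = α ᵥ* Matrix.fromRows M (Matrix.diagonal (B v.1.1)) := by
  classical
  refine ⟨Sum.elim (Pi.single i 1)
    (fun b => if b = v.1.2 then 0 else cliqueRow R Cl b), ?_⟩
  rw [Matrix.sumElim_vecMul_fromRows]
  ext b
  rw [Pi.add_apply, Matrix.vecMul_diagonal, Matrix.single_one_vecMul]
  simp only [Matrix.row, hi]
  by_cases hb : b = v.1.2
  · subst hb
    have : cliqueRow R Cl v.1.2 = 1 := if_pos ⟨v, hv, rfl⟩
    simp [e, this]
  · by_cases hw : ∃ w ∈ Cl, w.1.2 = b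
    · have h1 : cliqueRow R Cl b = 1 := if_pos hw
      obtain ⟨w, hw, hwb⟩ := hw
      have hne : v ≠ w := by
        rintro rfl
        exact hb hwb.symm
      have hB : B v.1.1 b = 1 := by
        rcases (hCl v hv w hw hne).2 with h | h
        · rw [← hwb]; exact h
        · exact absurd (h.trans hwb).symm hb
      simp only [e, h1, hB, hb, if_false, ne_eq, not_false_eq_true, Pi.single_eq_of_ne]
      decide
    · have h0 : cliqueRow R Cl b = 0 := if_neg hw
      simp [e, h0, hb]

theorem taskbased_le_min_partition_chrom {n m : ℕ}
    (R B : Matrix (Fin n) (Fin m) (ZMod 2)) (hdisj : DisjointSupports R B)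
    (hheld : ∀ u a, R u a = 1 → ∃ w, B w a = 1) :
    Topt R B ≤ sInf {s | ∃ N : Fin n → Set (Vtx R), IsNbhdPartition R B N ∧
      s = ∑ i, cliqueCoverNum (probEdge R B) (N i)} := by
  classical
  have hne : {s | ∃ N : Fin n → Set (Vtx R), IsNbhdPartition R B N ∧
      s = ∑ i, cliqueCoverNum (probEdge R B) (N i)}.Nonempty := by
    have hh : ∀ v : Vtx R, ∃ w, B w v.1.2 = 1 := fun v => hheld _ _ v.2
    choose g hg using hh
    refine ⟨_, fun i => {v | g v = i}, ⟨?_, ?_, ?_⟩, rfl⟩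
    · rintro i v rfl
      exact hg v
    · intro i j hij
      rw [Set.disjoint_left]
      rintro v rfl h
      exact hij h
    · ext v
      simp
  obtain ⟨N, ⟨hN, -, hU⟩, hs⟩ := Nat.sInf_mem hne
  rw [hs]
  choose Cl hsub hcl _ hun using fun i => cliqueCover_spec (probEdge R B) (N i)
  have hmem : ∀ v : Vtx R, ∃ l, ∃ i, v ∈ Cl l i := by
    intro v
    have hv : v ∈ ⋃ i, N i := by rw [hU]; trivial
    obtain ⟨l, hl⟩ := Set.mem_iUnion.1 hv
    rw [← hun l] at hl
    exact ⟨l, Set.mem_iUnion.1 hl⟩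
  apply Nat.sInf_le
  refine ⟨_, fun l => Matrix.of fun i => cliqueRow R (Cl l i), ⟨⟨?_, ?_⟩, ?_⟩, rfl⟩
  · intro u a hB i
    refine if_neg ?_
    rintro ⟨v, hv, rfl⟩
    have h1 : B u v.1.2 = 1 := hN u (hsub u i hv)
    rw [hB] at h1
    exact absurd h1 (by decide)
  · intro u a hR
    obtain ⟨l, i, hv⟩ := hmem ⟨(u, a), hR⟩
    exact decode R B _ (Cl l i) (hcl l i) ⟨(u, a), hR⟩ hv ⟨l, i⟩ rfl
  · intro u a hR
    obtain ⟨l, i, hv⟩ := hmem ⟨(u, a), hR⟩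
    exact ⟨l, decode R B _ (Cl l i) (hcl l i) ⟨(u, a), hR⟩ hv i rfl⟩

end EIC
end

section
/- Let (R,B) be an EIC problem with problem graph G=(V,E) in which every node requests at least one block and every requested block is held by some node. If (χ(G)−1)·χ(Ḡ) < |V|, then there exists a neighborhood partition {Ñ_1,…,Ñ_n} corresponding to an optimal task-based solution such that (C)_{(R,B)} ≤ χ(Ḡ) < Σ_{i=1}^n ω(Ḡ|_{Ñ_i}) ≤ (T)_{(R,B)}; in particular (C)_{(R,B)} < (T)_{(R,B)}. -/
open Matrix BigOperators

namespace EIC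

variable {n m : ℕ}

lemma decodable_iff {m : ℕ} {ι : Type} [Fintype ι] (β : Matrix ι (Fin m) (ZMod 2))
    (b : Fin m → ZMod 2) (x : Fin m → ZMod 2) :
    (∃ α : ι ⊕ Fin m → ZMod 2, x = α ᵥ* Matrix.fromRows β (Matrix.diagonal b)) ↔
      ∃ γ : ι → ZMod 2, ∀ c, b c = 0 → x c = (γ ᵥ* β) c := by
  constructor
  · rintro ⟨α, hα⟩
    refine ⟨α ∘ Sum.inl, fun c hc => ?_⟩
    rw [hα, Matrix.vecMul_fromRows]
    simp [Matrix.vecMul_diagonal, hc]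
  · rintro ⟨γ, hγ⟩
    refine ⟨Sum.elim γ (fun c => x c - (γ ᵥ* β) c), ?_⟩
    funext c
    rw [Matrix.vecMul_fromRows]
    simp only [Sum.elim_comp_inl, Sum.elim_comp_inr, Pi.add_apply, Matrix.vecMul_diagonal]
    rcases zmod2_cases (b c) with h | h
    · rw [h, hγ c h]; simp
    · rw [h]; ring

lemma indep_bdd {V : Type} [Fintype V] (E : V → V → Prop) (S : Set V) :
    BddAbove {t | ∃ I ⊆ S, IsIndep E I ∧ I.ncard = t} := by
  refine ⟨Fintype.card V, ?_⟩
  rintro t ⟨I, -, -, rfl⟩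
  rw [← Nat.card_eq_fintype_card]
  exact Set.ncard_le_card I

lemma le_indepNum {V : Type} [Fintype V] (E : V → V → Prop) (S : Set V) (I : Finset V)
    (hS : (I : Set V) ⊆ S) (hI : IsIndep E (I : Set V)) : I.card ≤ indepNum E S :=
  le_csSup (indep_bdd E S) ⟨I, hS, hI, Set.ncard_coe_finset I⟩

lemma indepNum_attained {V : Type} [Fintype V] (E : V → V → Prop) (S : Set V) :
    ∃ I ⊆ S, IsIndep E I ∧ I.ncard = indepNum E S := by
  have h : indepNum E S ∈ {t | ∃ I ⊆ S, IsIndep E I ∧ I.ncard = t} :=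
    Nat.sSup_mem ⟨0, ∅, by simp, by intro k hk; simp at hk, by simp⟩ (indep_bdd E S)
  exact h

lemma chrom_attained {V : Type} [Fintype V] (E : V → V → Prop) :
    ∃ I : Fin (chromNum E) → Set V, (∀ i, IsIndep E (I i)) ∧
    (∀ i j, i ≠ j → Disjoint (I i) (I j)) ∧ (⋃ i, I i) = Set.univ := by
  have h : chromNum E ∈ {t | ∃ I : Fin t → Set V, (∀ i, IsIndep E (I i)) ∧
    (∀ i j, i ≠ j → Disjoint (I i) (I j)) ∧ (⋃ i, I i) = Set.univ} := by
    refine Nat.sInf_mem ⟨Fintype.card V, fun i => {(Fintype.equivFin V).symm i}, ?_, ?_, ?_⟩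
    · intro i k hk l hl hkl
      simp only [Set.mem_singleton_iff] at hk hl
      exact absurd (hk.trans hl.symm) hkl
    · intro i j hij
      simpa using hij
    · ext v
      simp only [Set.mem_iUnion, Set.mem_singleton_iff, Set.mem_univ, iff_true]
      exact ⟨Fintype.equivFin V v, by simp⟩
  exact h

lemma cover_attained {V : Type} [Fintype V] (E : V → V → Prop) :
    ∃ Cl : Fin (cliqueCoverNum E Set.univ) → Set V, (∀ i, IsClique E (Cl i)) ∧
      (⋃ i, Cl i) = Set.univ := by
  have h : cliqueCoverNum E Set.univ ∈ {t | ∃ Cl : Fin t → Set V, (∀ i, Cl i ⊆ Set.univ) ∧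
    (∀ i, IsClique E (Cl i)) ∧
    (∀ i j, i ≠ j → Disjoint (Cl i) (Cl j)) ∧ (⋃ i, Cl i) = Set.univ} := by
    refine Nat.sInf_mem ⟨Fintype.card V, fun i => {(Fintype.equivFin V).symm i}, ?_, ?_, ?_, ?_⟩
    · intro i; exact Set.subset_univ _
    · intro i k hk l hl hkl
      simp only [Set.mem_singleton_iff] at hk hl
      exact absurd (hk.trans hl.symm) hkl
    · intro i j hij
      simpa using hij
    · ext v
      simp only [Set.mem_iUnion, Set.mem_singleton_iff, Set.mem_univ, iff_true]
      exact ⟨Fintype.equivFin V v, by simp⟩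
  obtain ⟨Cl, -, h1, -, h2⟩ := h
  exact ⟨Cl, h1, h2⟩

lemma Copt_le_cover {n m : ℕ} (R B : Matrix (Fin n) (Fin m) (ZMod 2))
    (hdisj : DisjointSupports R B) :
    Copt R B ≤ cliqueCoverNum (probEdge R B) Set.univ := by
  classical
  obtain ⟨Cl, hcl, hcov⟩ := cover_attained (probEdge R B)
  refine Nat.sInf_le ⟨Matrix.of fun i c => if ∃ v ∈ Cl i, v.1.2 = c then 1 else 0, ?_⟩
  intro u a hua
  rw [decodable_iff]
  have hv : (⟨(u, a), hua⟩ : Vtx R) ∈ ⋃ i, Cl i := by rw [hcov]; trivial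
  obtain ⟨i, hi⟩ := Set.mem_iUnion.1 hv
  refine ⟨Pi.single i 1, fun c hc => ?_⟩
  rw [Matrix.single_one_vecMul]
  simp only [e, Matrix.row, Matrix.of_apply]
  by_cases hca : c = a
  · subst hca
    rw [if_pos ⟨_, hi, rfl⟩]; simp
  · rw [if_neg, Pi.single_eq_of_ne hca]
    rintro ⟨w, hw, hwc⟩
    have hne : (⟨(u, a), hua⟩ : Vtx R) ≠ w := by
      rintro rfl; exact hca hwc.symm
    rcases (hcl i _ hi _ hw hne).2 with h | h
    · simp only [hwc] at h
      rw [hc] at h; exact absurd h (by decide)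
    · simp only [hwc] at h
      exact hca h.symm

lemma task_attained {n m : ℕ} (R B : Matrix (Fin n) (Fin m) (ZMod 2))
    (hdisj : DisjointSupports R B) (hheld : ∀ u a, R u a = 1 → ∃ w, B w a = 1) :
    ∃ (h : Fin n → ℕ) (β : ∀ u : Fin n, Matrix (Fin (h u)) (Fin m) (ZMod 2)),
    IsTaskBased R B β ∧ ∑ u, h u = Topt R B := by
  have key : Topt R B ∈ {s | ∃ (h : Fin n → ℕ)
      (β : ∀ u : Fin n, Matrix (Fin (h u)) (Fin m) (ZMod 2)),
      IsTaskBased R B β ∧ ∑ u, h u = s} := by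
    have hrow : ∀ w a, B w a = 1 → ∀ c, e m a c = Matrix.diagonal (B w) a c := by
      intro w a hw c
      by_cases hca : c = a
      · subst hca; simp [e, hw]
      · simp [e, hca, Matrix.diagonal_apply_ne' _ hca]
    refine Nat.sInf_mem ⟨_, fun _ => m, fun u => Matrix.diagonal (B u), ⟨⟨?_, ?_⟩, ?_⟩, rfl⟩
    · intro u a hz i
      by_cases hia : i = a
      · subst hia; simp [hz]
      · exact Matrix.diagonal_apply_ne _ hia
    · intro u a hua
      rw [decodable_iff]
      obtain ⟨w, hw⟩ := hheld u a hua
      refine ⟨Pi.single ⟨w, a⟩ 1, fun c _ => ?_⟩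
      rw [Matrix.single_one_vecMul]
      exact hrow w a hw c
    · intro u a hua
      obtain ⟨w, hw⟩ := hheld u a hua
      refine ⟨w, ?_⟩
      rw [decodable_iff]
      refine ⟨Pi.single a 1, fun c _ => ?_⟩
      rw [Matrix.single_one_vecMul]
      exact hrow w a hw c
  exact key

lemma indep_le_rows {n m h : ℕ} (R B : Matrix (Fin n) (Fin m) (ZMod 2))
    (hdisj : DisjointSupports R B) (β : Matrix (Fin h) (Fin m) (ZMod 2)) (S : Set (Vtx R))
    (hS : ∀ v ∈ S, ∃ α : Fin h ⊕ Fin m → ZMod 2,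
        e m v.1.2 = α ᵥ* Matrix.fromRows β (Matrix.diagonal (B v.1.1))) :
    indepNum (probEdge R B) S ≤ h := by
  classical
  obtain ⟨I, hIS, hI, hcard⟩ := indepNum_attained (probEdge R B) S
  rw [← hcard]
  have h1 : ∀ v : I, ∃ γ : Fin h → ZMod 2, ∀ c, B v.1.1.1 c = 0 →
      e m v.1.1.2 c = (γ ᵥ* β) c := fun v =>
    (decodable_iff _ _ _).1 (hS v.1 (hIS v.2))
  choose γ hγ using h1
  have h2 : ∀ v w : I, (γ v ᵥ* β) w.1.1.2 = if v = w then 1 else 0 := by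
    intro v w
    have hB : B v.1.1.1 w.1.1.2 = 0 := by
      rcases zmod2_cases (B v.1.1.1 w.1.1.2) with hz | hz
      · exact hz
      · by_cases hvw : v = w
        · subst hvw
          exact absurd ⟨hz, v.1.2⟩ (hdisj _ _)
        · have hvw' : v.1 ≠ w.1 := fun hh => hvw (Subtype.ext hh)
          exact absurd ⟨hvw', Or.inl hz⟩ (hI _ v.2 _ w.2 hvw').1
    rw [← hγ v _ hB]
    by_cases hvw : v = w
    · subst hvw; simp [e]
    · have hvw' : v.1 ≠ w.1 := fun hh => hvw (Subtype.ext hh)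
      have hne : w.1.1.2 ≠ v.1.1.2 := fun hh =>
        (hI _ v.2 _ w.2 hvw').1 ⟨hvw', Or.inr hh.symm⟩
      simp [e, hne, hvw]
  have hli : LinearIndependent (ZMod 2) γ := by
    rw [Fintype.linearIndependent_iff]
    intro g hg w
    have h3 : ((∑ v, g v • γ v) ᵥ* β) w.1.1.2 = 0 := by rw [hg]; simp
    rw [Matrix.sum_vecMul] at h3
    simpa [Finset.sum_apply, Matrix.smul_vecMul, h2] using h3
  have := hli.fintype_card_le_finrank
  rw [Module.finrank_fin_fun] at this
  rwa [← Nat.card_coe_set_eq, Nat.card_eq_fintype_card]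

theorem chrom_gap {n m : ℕ}
    (R B : Matrix (Fin n) (Fin m) (ZMod 2)) (hdisj : DisjointSupports R B)
    (hreq : ∀ u, ∃ a, R u a = 1)
    (hheld : ∀ u a, R u a = 1 → ∃ w, B w a = 1)
    (hgap : (chromNum (probEdge R B) - 1) * cliqueCoverNum (probEdge R B) Set.univ
      < Fintype.card (Vtx R)) :
    ∃ (h : Fin n → ℕ) (β : ∀ u : Fin n, Matrix (Fin (h u)) (Fin m) (ZMod 2))
      (N : Fin n → Set (Vtx R)),
      IsTaskBased R B β ∧ (∑ u, h u) = Topt R B ∧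
      IsNbhdPartition R B N ∧
      (∀ i : Fin n, ∀ v ∈ N i, ∃ α : Fin (h i) ⊕ Fin m → ZMod 2,
        e m v.1.2 = α ᵥ* Matrix.fromRows (β i) (Matrix.diagonal (B v.1.1))) ∧
      Copt R B ≤ cliqueCoverNum (probEdge R B) Set.univ ∧
      cliqueCoverNum (probEdge R B) Set.univ < ∑ i, indepNum (probEdge R B) (N i) ∧
      ∑ i, indepNum (probEdge R B) (N i) ≤ Topt R B := by
  classical
  obtain ⟨h, β, hT, hsum⟩ := task_attained R B hdisj hheld
  have hf0 : ∀ v : Vtx R, ∃ ℓ : Fin n, ∃ α : Fin (h ℓ) ⊕ Fin m → ZMod 2,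
      e m v.1.2 = α ᵥ* Matrix.fromRows (β ℓ) (Matrix.diagonal (B v.1.1)) :=
    fun v => hT.2 _ _ v.2
  choose f hf using hf0
  have hsend : ∀ v, B (f v) v.1.2 = 1 := by
    intro v
    rcases zmod2_cases (B (f v) v.1.2) with hz | hz
    · exfalso
      obtain ⟨γ, hγ⟩ := (decodable_iff _ _ _).1 (hf v)
      have hB : B v.1.1 v.1.2 = 0 := by
        rcases zmod2_cases (B v.1.1 v.1.2) with h' | h'
        · exact h'
        · exact absurd ⟨h', v.2⟩ (hdisj _ _)
      have h1 := hγ _ hB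
      have h2 : (γ ᵥ* β (f v)) v.1.2 = 0 := by
        simp [Matrix.vecMul, dotProduct, hT.1.1 _ _ hz]
      rw [h2] at h1
      simp [e] at h1
    · exact hz
  have hdec : ∀ i : Fin n, ∀ v ∈ {v | f v = i}, ∃ α : Fin (h i) ⊕ Fin m → ZMod 2,
        e m v.1.2 = α ᵥ* Matrix.fromRows (β i) (Matrix.diagonal (B v.1.1)) := by
    rintro i v rfl
    exact hf v
  refine ⟨h, β, fun i => {v | f v = i}, hT, hsum, ⟨?_, ?_, ?_⟩, hdec,
    Copt_le_cover R B hdisj, ?_, ?_⟩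
  · rintro i v rfl
    exact hsend v
  · intro i j hij
    rw [Set.disjoint_left]
    rintro v rfl h2
    exact hij h2
  · ext v; simp
  · obtain ⟨I, hI, -, hcov⟩ := chrom_attained (probEdge R B)
    have hcol0 : ∀ v, ∃ j, v ∈ I j := by
      intro v
      exact Set.mem_iUnion.1 (hcov ▸ Set.mem_univ v)
    choose col hcol using hcol0
    have hN : ∀ i : Fin n, (Finset.univ.filter fun v => f v = i).card ≤
        indepNum (probEdge R B) {v | f v = i} * (chromNum (probEdge R B) - 1) := by
      intro i
      obtain ⟨a, ha⟩ := hreq i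
      set v0 : Vtx R := ⟨(i, a), ha⟩ with hv0
      have hc : (Finset.univ.erase (col v0)).card = chromNum (probEdge R B) - 1 := by
        rw [Finset.card_erase_of_mem (Finset.mem_univ _)]; simp
      rw [← hc]
      refine Finset.card_le_mul_card_image_of_maps_to (f := col) ?_ _ ?_
      · intro v hv
        simp only [Finset.coe_filter, Finset.mem_univ, true_and, Set.mem_setOf_eq,
          Finset.mem_filter] at hv
        have hB : B i v.1.2 = 1 := hv ▸ hsend v
        have hne : v0 ≠ v := by
          intro hh
          rw [← hh] at hB
          exact hdisj i a ⟨hB, ha⟩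
        simp only [Finset.mem_erase, Finset.mem_univ, and_true, Finset.coe_erase,
          Finset.mem_coe, ne_eq]
        intro hcc
        exact (hI (col v0) v0 (hcol v0) v (hcc ▸ hcol v) hne).1 ⟨hne, Or.inl hB⟩
      · intro j _
        apply le_indepNum
        · intro v hv
          simp at hv
          exact hv.1
        · intro k hk l hl hkl
          simp at hk hl
          exact hI j k (hk.2 ▸ hcol k) l (hl.2 ▸ hcol l) hkl
    have hV : Fintype.card (Vtx R) ≤
        (∑ i, indepNum (probEdge R B) {v | f v = i}) * (chromNum (probEdge R B) - 1) := by
      rw [Finset.sum_mul, ← Finset.card_univ,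
        Finset.card_eq_sum_card_fiberwise (f := f) (t := Finset.univ) (by simp)]
      exact Finset.sum_le_sum fun i _ => hN i
    have hlt := hgap.trans_le hV
    rw [mul_comm] at hlt
    exact lt_of_mul_lt_mul_right hlt (Nat.zero_le _)
  · rw [← hsum]
    exact Finset.sum_le_sum fun i _ => indep_le_rows R B hdisj (β i) _ (hdec i)

end EIC
end

section
/- Let (R,B) be an EIC problem with problem graph G=(V,E), and let 𝒞' ⊆ 𝒞 be a cover of V by neighborhood-cliques. Then there exists a neighborhood partition {Ñ_1,…,Ñ_n} with Σ_{i=1}^n χ(Ḡ|_{Ñ_i}) ≤ |𝒞'|. -/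
open Matrix BigOperators

namespace EIC

variable {n m : ℕ}

theorem cover_to_partition {n m : ℕ}
    (R B : Matrix (Fin n) (Fin m) (ZMod 2)) (hdisj : DisjointSupports R B)
    (F : Set (Set (Vtx R))) (hF : F ⊆ nbhdCliques R B) (hcover : ⋃₀ F = Set.univ) :
    ∃ N : Fin n → Set (Vtx R), IsNbhdPartition R B N ∧
      ∑ i, cliqueCoverNum (probEdge R B) (N i) ≤ F.ncard := by
  classical
  have hc : ∀ v : Vtx R, ∃ C : F, v ∈ C.1 := by
    intro v
    have hv : v ∈ ⋃₀ F := hcover ▸ Set.mem_univ v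
    obtain ⟨C, hC, hvC⟩ := hv
    exact ⟨⟨C, hC⟩, hvC⟩
  choose c hc using hc
  have hs : ∀ C : F, ∃ i : Fin n, C.1 ⊆ senderNbhd R B i ∧ IsClique (probEdge R B) C.1 := by
    intro C
    obtain ⟨i, h1, h2, _⟩ := hF C.2
    exact ⟨i, h1, h2⟩
  choose s hs1 hs2 using hs
  haveI : Fintype F := Fintype.ofFinite F
  refine ⟨fun i => {v | s (c v) = i}, ⟨?_, ?_, ?_⟩, ?_⟩
  · rintro i v rfl
    exact hs1 _ (hc v)
  · intro i j hij
    rw [Set.disjoint_left]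
    intro v hi hj
    exact hij (hi.symm.trans hj)
  · ext v
    simp
  · have key : ∀ i, cliqueCoverNum (probEdge R B) {v | s (c v) = i}
        ≤ Fintype.card {C : F // s C = i} := by
      intro i
      let eq := Fintype.equivFin {C : F // s C = i}
      apply Nat.sInf_le
      refine ⟨fun t => {v | c v = (eq.symm t).1}, ?_, ?_, ?_, ?_⟩
      · intro t v hv
        have hv' : c v = (eq.symm t).1 := hv
        change s (c v) = i
        rw [hv']
        exact (eq.symm t).2
      · intro t k hk l hl hkl
        have hk' : c k = (eq.symm t).1 := hk
        have hl' : c l = (eq.symm t).1 := hl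
        exact hs2 (eq.symm t).1 k (hk' ▸ hc k) l (hl' ▸ hc l) hkl
      · intro a b hab
        rw [Set.disjoint_left]
        intro v ha hb
        exact hab (eq.symm.injective (Subtype.ext (ha.symm.trans hb)))
      · ext v
        simp only [Set.mem_iUnion, Set.mem_setOf_eq]
        constructor
        · rintro ⟨t, ht⟩
          rw [ht]
          exact (eq.symm t).2
        · intro h
          exact ⟨eq ⟨c v, h⟩, by simp⟩
    calc _ ≤ ∑ i, Fintype.card {C : F // s C = i} := Finset.sum_le_sum fun i _ => key i
      _ = Fintype.card ((i : Fin n) × {C : F // s C = i}) := Fintype.card_sigma.symm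
      _ = Fintype.card F := Fintype.card_congr (Equiv.sigmaFiberEquiv s)
      _ = F.ncard := by rw [← Nat.card_eq_fintype_card, Nat.card_coe_set_eq]

end EIC
end

section
/- Let (R,B) be an EIC problem with problem graph G, and let β ∈ F_2^{s×m} be a centralized linear broadcast solution to (R,B). Then there exists a matrix A ∈ F_2^{V×m} such that φ_{(R,B)}(A) fits G and every row of A lies in the row span of β; in particular, s ≥ rank_2(A) = rank_2(φ_{(R,B)}(A)) ≥ rminrk_2(G, 𝒜_{(R,B)}). -/
open Matrix BigOperators

namespace EIC

variable {n m : ℕ}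

theorem centralized_solution_gives_fitting_matrix {n m : ℕ}
    (R B : Matrix (Fin n) (Fin m) (ZMod 2)) (hdisj : DisjointSupports R B)
    {s : ℕ} (β : Matrix (Fin s) (Fin m) (ZMod 2))
    (hsol : IsCentralizedSolution R B β) :
    ∃ A : Matrix (Vtx R) (Fin m) (ZMod 2),
      Fits (probEdge R B) (phi R A) ∧
      (∀ v, A v ∈ Submodule.span (ZMod 2) (Set.range fun i => β i)) ∧
      A.rank ≤ s ∧ A.rank = (phi R A).rank ∧
      rminrk (probEdge R B) (Set.range (phi R)) ≤ (phi R A).rank := by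
  classical
  have h01 : ∀ x : ZMod 2, x ≠ 1 → x = 0 := by decide
  set W := Submodule.span (ZMod 2) (Set.range fun i => β i) with hW
  -- Step 1: decoding rows
  have h1 : ∀ v : Vtx R, ∃ w : W, ∀ b, B v.1.1 b ≠ 1 → w.1 b = e m v.1.2 b := by
    intro v
    obtain ⟨α, hα⟩ := hsol v.1.1 v.1.2 v.2
    refine ⟨⟨(α ∘ Sum.inl) ᵥ* β, ?_⟩, ?_⟩
    · rw [Matrix.vecMul_eq_sum]
      exact Submodule.sum_mem _ fun i _ =>
        Submodule.smul_mem _ _ (Submodule.subset_span ⟨i, rfl⟩)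
    · intro b hb
      have h := congrFun hα b
      rw [Matrix.vecMul_fromRows, Pi.add_apply, Matrix.vecMul_diagonal, h01 _ hb, mul_zero,
        add_zero] at h
      exact h.symm
  choose w hw using h1
  -- Step 2: a linear section of the restriction to requested columns
  let π : (Fin m → ZMod 2) →ₗ[ZMod 2] (Vtx R → ZMod 2) :=
    LinearMap.funLeft (ZMod 2) (ZMod 2) (fun v : Vtx R => v.1.2)
  let f := π ∘ₗ W.subtype
  obtain ⟨σ, hσ⟩ := LinearMap.exists_rightInverse_of_surjective f.rangeRestrict
    f.range_rangeRestrict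
  obtain ⟨g, hg⟩ := LinearMap.exists_extend σ
  have hfg : ∀ x : W, f (g (f x)) = f x := by
    intro x
    have e1 : g (f x) = σ (f.rangeRestrict x) := by
      rw [← hg]; rfl
    rw [e1]
    have e2 := LinearMap.congr_fun hσ (f.rangeRestrict x)
    exact congrArg Subtype.val e2
  let A : Matrix (Vtx R) (Fin m) (ZMod 2) := Matrix.of fun v => (g (f (w v))).1
  have hphi : ∀ v, (phi R A) v = f (w v) := fun v => hfg (w v)
  have hA : ∀ v, A v = (g (f (w v))).1 := fun v => rfl
  have hAW : ∀ v, A v ∈ W := fun v => (g (f (w v))).2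
  have hfits : Fits (probEdge R B) (phi R A) := by
    constructor
    · intro k
      rw [hphi k]
      refine (hw k k.1.2 fun h => hdisj _ _ ⟨h, k.2⟩).trans ?_
      simp [e]
    · intro k l hkl hE
      rw [hphi k]
      have hB : B k.1.1 l.1.2 ≠ 1 := fun h => hE ⟨hkl, Or.inl h⟩
      have hab : k.1.2 ≠ l.1.2 := fun h => hE ⟨hkl, Or.inr h⟩
      refine (hw k l.1.2 hB).trans ?_
      simp [e, hab.symm]
  refine ⟨A, hfits, hAW, ?_, ?_, Nat.sInf_le ⟨phi R A, ⟨A, rfl⟩, hfits, rfl⟩⟩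
  · rw [Matrix.rank_eq_finrank_span_row]
    have hle : Submodule.span (ZMod 2) (Set.range A.row) ≤ W :=
      Submodule.span_le.2 (by rintro _ ⟨v, rfl⟩; exact hAW v)
    refine (Submodule.finrank_mono hle).trans ?_
    exact (finrank_range_le_card (R := ZMod 2) (fun i => β i)).trans (by simp)
  · rw [Matrix.rank_eq_finrank_span_row, Matrix.rank_eq_finrank_span_row]
    apply le_antisymm
    · have : Submodule.span (ZMod 2) (Set.range A.row)
          = (Submodule.span (ZMod 2) (Set.range (phi R A).row)).map (W.subtype ∘ₗ g) := by
        rw [Submodule.map_span, ← Set.range_comp]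
        congr 2
        funext v
        change A v = (g ((phi R A) v)).1
        rw [hphi v, hA v]
      rw [this]
      exact Submodule.finrank_map_le _ _
    · have : Submodule.span (ZMod 2) (Set.range (phi R A).row)
          = (Submodule.span (ZMod 2) (Set.range A.row)).map π := by
        rw [Submodule.map_span, ← Set.range_comp]
        rfl
      rw [this]
      exact Submodule.finrank_map_le _ _

end EIC
end

section
/- Let (R,B) be an EIC problem with problem graph G such that every requested block is held by some node (for every (u,a) ∈ P there exists w ∈ [n] with B_{wa}=1). If A ∈ F_2^{V×m} is a matrix such that φ_{(R,B)}(A) fits G, then there exists a decentralized linear broadcast solution to (R,B) of length at most 2·rank_2(A). -/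
open Matrix BigOperators

namespace EIC

variable {n m : ℕ}

/-- A finite family of transmissions, each with an allowed sender, assembles to a solution. -/
lemma assemble {n m : ℕ} (R B : Matrix (Fin n) (Fin m) (ZMod 2))
    {T : Type} [Fintype T] (s : T → Fin n) (t : T → Fin m → ZMod 2)
    (ht : ∀ i a, B (s i) a = 0 → t i a = 0)
    (hdec : ∀ u a, R u a = 1 → ∃ x ∈ Submodule.span (ZMod 2) (Set.range t),
      ∀ b, B u b = 0 → x b = e m a b) :
    ∃ (h : Fin n → ℕ) (β : ∀ u : Fin n, Matrix (Fin (h u)) (Fin m) (ZMod 2)),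
      IsBroadcastSolution R B β ∧ ∑ u, h u = Fintype.card T := by
  classical
  refine ⟨fun u => Fintype.card {i // s i = u},
    fun u => Matrix.of fun j => t ((Fintype.equivFin {i // s i = u}).symm j).1, ⟨?_, ?_⟩, ?_⟩
  · intro u a hB j
    have := ((Fintype.equivFin {i // s i = u}).symm j).2
    exact ht _ _ (by rw [this]; exact hB)
  · intro u a hR
    obtain ⟨x, hx, hxa⟩ := hdec u a hR
    set M := Matrix.fromRows (vconcat fun u => Matrix.of fun j =>
      t ((Fintype.equivFin {i // s i = u}).symm j).1) (Matrix.diagonal (B u)) with hM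
    have hxS : x ∈ Submodule.span (ZMod 2) (Set.range M.row) := by
      refine Submodule.span_le.2 ?_ hx
      rintro _ ⟨i, rfl⟩
      refine Submodule.subset_span
        ⟨Sum.inl ⟨s i, Fintype.equivFin {k // s k = s i} ⟨i, rfl⟩⟩, ?_⟩
      funext b
      simp [hM, vconcat, Matrix.row]
    have hdS : x - e m a ∈ Submodule.span (ZMod 2) (Set.range M.row) := by
      have hsum : x - e m a = ∑ b, (x - e m a) b • M.row (Sum.inr b) := by
        funext c
        rw [Finset.sum_apply, Finset.sum_eq_single c]
        · rcases zmod2_cases (B u c) with h0 | h1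
          · simp [hxa c h0]
          · simp [hM, Matrix.row, h1]
        · intro b _ hbc
          simp [hM, Matrix.row, Matrix.diagonal_apply_ne _ hbc]
        · simp
      rw [hsum]
      exact Submodule.sum_mem _ fun b _ =>
        Submodule.smul_mem _ _ (Submodule.subset_span ⟨_, rfl⟩)
    have he : e m a ∈ Submodule.span (ZMod 2) (Set.range M.row) := by
      have := Submodule.sub_mem _ hxS hdS
      simpa using this
    obtain ⟨α, hα⟩ := (Submodule.mem_span_range_iff_exists_fun (ZMod 2)).1 he
    refine ⟨α, ?_⟩
    rw [← hα, Matrix.vecMul_eq_sum]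
    rfl
  · rw [← Fintype.card_sigma]
    exact Fintype.card_congr (Equiv.sigmaFiberEquiv s)

theorem fitting_matrix_gives_decentralized {n m : ℕ}
    (R B : Matrix (Fin n) (Fin m) (ZMod 2)) (hdisj : DisjointSupports R B)
    (hheld : ∀ u a, R u a = 1 → ∃ w, B w a = 1)
    (A : Matrix (Vtx R) (Fin m) (ZMod 2))
    (hfits : Fits (probEdge R B) (phi R A)) :
    ∃ (h : Fin n → ℕ) (β : ∀ u : Fin n, Matrix (Fin (h u)) (Fin m) (ZMod 2)),
      IsBroadcastSolution R B β ∧ ∑ u, h u ≤ 2 * A.rank := by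
  classical
  set D : Fin m → ZMod 2 := fun b => if ∃ w, R w b = 1 then 1 else 0 with hD
  set A' : Matrix (Vtx R) (Fin m) (ZMod 2) := A * Matrix.diagonal D with hA'
  have hrank : A'.rank ≤ A.rank := Matrix.rank_mul_le_left _ _
  have hone : ∀ k : Vtx R, A' k k.1.2 = 1 := by
    intro k
    have h1 : A k k.1.2 = 1 := hfits.1 k
    have h2 : D k.1.2 = 1 := if_pos ⟨k.1.1, k.2⟩
    simp [hA', Matrix.mul_diagonal, h1, h2]
  have hzero : ∀ (k : Vtx R) (b : Fin m), b ≠ k.1.2 → B k.1.1 b = 0 → A' k b = 0 := by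
    intro k b hb hB
    by_cases hw : ∃ w, R w b = 1
    · obtain ⟨w, hw⟩ := hw
      have h1 : A k b = 0 := by
        refine hfits.2 k ⟨(w, b), hw⟩ ?_ ?_
        · intro h; exact hb (by rw [h])
        · rintro ⟨-, h | h⟩
          · simp [hB] at h
          · exact hb h.symm
      simp [hA', Matrix.mul_diagonal, h1]
    · have h2 : D b = 0 := if_neg hw
      simp [hA', Matrix.mul_diagonal, h2]
  have hrow : ∀ (k : Vtx R) (b : Fin m), B k.1.1 b = 0 → A' k b = e m k.1.2 b := by
    intro k b hB
    by_cases hb : b = k.1.2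
    · subst hb; rw [hone]; simp [e]
    · rw [hzero k b hb hB]; simp [e, hb]
  obtain ⟨κ, f, hf, hspan, hli⟩ := exists_linearIndependent' (ZMod 2) A'.row
  have : Finite κ := Finite.of_injective f hf
  have : Fintype κ := Fintype.ofFinite κ
  have hcard : Fintype.card κ = A'.rank := by
    rw [Matrix.rank_eq_finrank_span_row, ← hspan, finrank_span_eq_card hli]
  choose w hw using fun k : Vtx R => hheld k.1.1 k.1.2 k.2
  have key := assemble R B (T := κ ⊕ κ)
    (Sum.elim (fun i => w (f i)) (fun i => (f i).1.1))
    (Sum.elim (fun i => e m (f i).1.2) (fun i => A' (f i) - e m (f i).1.2)) ?_ ?_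
  · obtain ⟨h, β, hβ, hs⟩ := key
    refine ⟨h, β, hβ, ?_⟩
    rw [hs, Fintype.card_sum, hcard]
    omega
  · rintro (i | i) a hB
    · have : a ≠ (f i).1.2 := by
        rintro rfl
        simp [hw] at hB
      simp [e, this]
    · simp only [Sum.elim_inr] at hB ⊢
      rw [Pi.sub_apply, hrow _ _ hB, sub_self]
  · intro u a hR
    refine ⟨A' ⟨(u, a), hR⟩, ?_, fun b hb => hrow ⟨(u, a), hR⟩ b hb⟩
    have hmem : A' ⟨(u, a), hR⟩ ∈ Submodule.span (ZMod 2) (Set.range (A'.row ∘ f)) := by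
      rw [hspan]; exact Submodule.subset_span ⟨_, rfl⟩
    refine Submodule.span_le.2 ?_ hmem
    rintro _ ⟨i, rfl⟩
    have h1 := Submodule.add_mem _
      (Submodule.subset_span (R := ZMod 2) (Set.mem_range_self (f := Sum.elim
        (fun i => e m (f i).1.2) (fun i => A' (f i) - e m (f i).1.2)) (Sum.inl i)))
      (Submodule.subset_span (R := ZMod 2) (Set.mem_range_self (f := Sum.elim
        (fun i => e m (f i).1.2) (fun i => A' (f i) - e m (f i).1.2)) (Sum.inr i)))
    simp only [Sum.elim_inl, Sum.elim_inr, add_sub_cancel] at h1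
    exact h1

end EIC
end
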